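/- arXiv:1902.06817 — 2 statements merged into one kernel-verified Lean document; each statement's English description precedes it below -/
import Mathlib

section
/- Fix a sequence of integers (a_k)_{k≥1}, an index i ≥ 1, and an even integer r with r > i. Define integers (x_n)_{n≥i} by x_i = 0 if i is even and x_i = 1 if i is odd, and for n ≥ i, x_{n+1} = a_{n+1}·x_n if n is odd and x_{n+1} = a_{n+1}·x_n − a_{n+1} + 1 if n is even. Then x_r = Σ_{k=1}^{r−i} γ_{r,i+k}·(−1)^k if i is even, and x_r = Σ_{k=1}^{r−i} γ_{r,i+k}·(−1)^{k+1} if i is odd. -/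
/-- `gam a n l` is the product `a n * a (n-1) * ⋯ * a l`, i.e. γ_{n,l}. -/
def gam (a : ℕ → ℤ) (n l : ℕ) : ℤ := ∏ k ∈ Finset.Icc l n, a k

theorem gam_succ (a : ℕ → ℤ) (n l : ℕ) (h : l ≤ n + 1) :
    gam a (n + 1) l = a (n + 1) * gam a n l := by
  unfold gam
  rw [← Finset.insert_Icc_right_eq_Icc_add_one h, Finset.prod_insert (by simp)]

theorem input_value_aux (a : ℕ → ℤ) (i : ℕ)
    (x : ℕ → ℤ) (hx : x i = if Even i then 0 else 1)
    (hrec : ∀ n : ℕ, i ≤ n → x (n + 1) =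
      if Odd n then a (n + 1) * x n else a (n + 1) * x n - a (n + 1) + 1) (m : ℕ) :
    x (i + m) = (if Even (i + m) then 0 else 1) +
      ∑ k ∈ Finset.Icc 1 m, gam a (i + m) (i + k) * (-1) ^ (i + k) := by
  induction m with
  | zero => simpa using hx
  | succ m ih =>
    have hs : ∑ k ∈ Finset.Icc 1 m, gam a (i + m + 1) (i + k) * (-1) ^ (i + k)
        = a (i + m + 1) * ∑ k ∈ Finset.Icc 1 m, gam a (i + m) (i + k) * (-1) ^ (i + k) := by
      rw [Finset.mul_sum]
      refine Finset.sum_congr rfl fun k hk => ?_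
      have := (Finset.mem_Icc.mp hk).2
      rw [gam_succ a (i + m) (i + k) (by omega)]
      ring
    have hg : gam a (i + m + 1) (i + m + 1) = a (i + m + 1) := by simp [gam]
    rw [Finset.sum_Icc_succ_top (by omega), ← add_assoc, hs, hg, hrec (i + m) (by omega), ih]
    rcases Nat.even_or_odd (i + m) with h | h
    · have h1 : ¬ Odd (i + m) := Nat.not_odd_iff_even.mpr h
      have h2 : ¬ Even (i + m + 1) := Nat.not_even_iff_odd.mpr h.add_one
      rw [if_neg h1, if_pos h, if_neg h2, h.add_one.neg_one_pow]
      ring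
    · have h1 : ¬ Even (i + m) := Nat.not_even_iff_odd.mpr h
      rw [if_pos h, if_neg h1, if_pos h.add_one, h.add_one.neg_one_pow]
      ring

/-- For `r` even with `r > i ≥ 1`, the input value `x_r^i` retrieved by the inverse
Diagonalize recurrence (started from `0` at an even level `i`, resp. `1` at an odd
level `i`) satisfies `x r = ∑_{k=1}^{r-i} γ_{r,i+k} (-1)^k` if `i` is even, and
`x r = ∑_{k=1}^{r-i} γ_{r,i+k} (-1)^(k+1)` if `i` is odd. -/
theorem input_value_r_even (a : ℕ → ℤ) (i r : ℕ) (hi : 1 ≤ i) (hr : Even r) (hir : i < r)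
    (x : ℕ → ℤ) (hx : x i = if Even i then 0 else 1)
    (hrec : ∀ n : ℕ, i ≤ n → x (n + 1) =
      if Odd n then a (n + 1) * x n else a (n + 1) * x n - a (n + 1) + 1) :
    (Even i →
      x r = ∑ k ∈ Finset.Icc 1 (r - i), gam a r (i + k) * (-1) ^ k) ∧
    (Odd i →
      x r = ∑ k ∈ Finset.Icc 1 (r - i), gam a r (i + k) * (-1) ^ (k + 1)) := by
  have key := input_value_aux a i x hx hrec (r - i)
  rw [Nat.add_sub_cancel' hir.le, if_pos hr, zero_add] at key
  refine ⟨fun h => ?_, fun h => ?_⟩ <;> rw [key] <;>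
    refine Finset.sum_congr rfl fun k _ => ?_
  · rw [pow_add, h.neg_one_pow, one_mul]
  · rw [pow_add, h.neg_one_pow, pow_succ]
    ring
end

section
/- Let r ≥ 2 be even and let a_1, …, a_r be integers with a_i ≥ 2 for all i. Let A be the real adjacency matrix of the graph G(a_1,…,a_r). Then the dimension of ker(A) equals a_1·a_2·⋯·a_{r−1}·(a_r − 1); that is, the multiplicity of the eigenvalue 0 of G(a_1,…,a_r) is a_1 a_2 ⋯ a_{r−1}(a_r − 1). -/
/-- The cograph with balanced cotree `T_G(a_1,…,a_{r-1},0|0,…,0,a_r)`: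
vertices are tuples `(v_1,…,v_r)` with `v_i ∈ {1,…,a_i}` (here indexed by `Fin r`,
coordinate `i : Fin r` corresponding to paper index `i+1`), two distinct tuples
being adjacent iff the least 1-based index at which they differ is odd
(equivalently, the least 0-based index is even). -/
def balG (r : ℕ) (a : ℕ → ℕ) :
    SimpleGraph ((i : Fin r) → Fin (a ((i : ℕ) + 1))) :=
  SimpleGraph.fromRel (fun u v => ∃ i : Fin r,
    u i ≠ v i ∧ Even (i : ℕ) ∧ ∀ j : Fin r, (j : ℕ) < (i : ℕ) → u j = v j)

open scoped Classical in
/-- The real adjacency matrix of `balG r a`. -/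
noncomputable def adjMat (r : ℕ) (a : ℕ → ℕ) :
    Matrix ((i : Fin r) → Fin (a ((i : ℕ) + 1))) ((i : Fin r) → Fin (a ((i : ℕ) + 1))) ℝ :=
  Matrix.of fun u v => if (balG r a).Adj u v then 1 else 0

open scoped Classical in
/-- Indicator of agreement on the first `k` coordinates. -/
noncomputable def eInd (r : ℕ) (a : ℕ → ℕ) (k : ℕ)
    (u v : (i : Fin r) → Fin (a ((i : ℕ) + 1))) : ℝ :=
  if ∀ j : Fin r, (j : ℕ) < k → u j = v j then 1 else 0

/-- Size of a class of tuples agreeing on the first `k` coordinates. -/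
def nCls (r : ℕ) (a : ℕ → ℕ) (k : ℕ) : ℕ :=
  ∏ i : Fin r, if (i : ℕ) < k then 1 else a ((i : ℕ) + 1)

lemma eInd_comm (r : ℕ) (a : ℕ → ℕ) (k : ℕ)
    (u v : (i : Fin r) → Fin (a ((i : ℕ) + 1))) : eInd r a k u v = eInd r a k v u := by
  unfold eInd
  simp only [eq_comm]

lemma sum_eInd (r : ℕ) (a : ℕ → ℕ) (k : ℕ)
    (v : (i : Fin r) → Fin (a ((i : ℕ) + 1))) : ∑ u, eInd r a k u v = nCls r a k := by
  classical
  unfold eInd nCls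
  rw [Finset.sum_boole]
  norm_cast
  have : (Finset.univ.filter fun u : (i : Fin r) → Fin (a ((i : ℕ) + 1)) =>
      ∀ j : Fin r, (j : ℕ) < k → u j = v j) =
      Fintype.piFinset (fun i : Fin r => if (i : ℕ) < k then {v i} else Finset.univ) := by
    ext u
    simp only [Finset.mem_filter, Finset.mem_univ, true_and, Fintype.mem_piFinset]
    refine forall_congr' fun i => ?_
    by_cases h : (i : ℕ) < k <;> simp [h]
  rw [this, Fintype.card_piFinset]
  refine Finset.prod_congr rfl fun (i : Fin r) _ => ?_
  by_cases h : (i : ℕ) < k <;> simp [h]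

lemma nCls_pos (r : ℕ) (a : ℕ → ℕ) (ha : ∀ k, 2 ≤ a k) (k : ℕ) : 0 < nCls r a k := by
  unfold nCls
  refine Finset.prod_pos fun i _ => ?_
  have := ha ((i : ℕ) + 1)
  split_ifs <;> omega

lemma nCls_lt (r : ℕ) (a : ℕ → ℕ) (ha : ∀ k, 2 ≤ a k) (k : ℕ) (hk : k < r) :
    nCls r a (k + 1) < nCls r a k := by
  unfold nCls
  refine Finset.prod_lt_prod (fun i _ => ?_) (fun i _ => ?_) ⟨⟨k, hk⟩, Finset.mem_univ _, ?_⟩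
  · have := ha ((i : ℕ) + 1)
    split_ifs <;> omega
  · have := ha ((i : ℕ) + 1)
    split_ifs <;> omega
  · have := ha (k + 1)
    simp
    omega

lemma eInd_mul (r : ℕ) (a : ℕ → ℕ) (k j : ℕ) (hkj : k ≤ j)
    (w u v : (i : Fin r) → Fin (a ((i : ℕ) + 1))) :
    eInd r a k w u * eInd r a j u v = eInd r a k w v * eInd r a j u v := by
  unfold eInd
  by_cases h : ∀ i : Fin r, (i : ℕ) < j → u i = v i
  · have : (∀ i : Fin r, (i : ℕ) < k → w i = u i) ↔ (∀ i : Fin r, (i : ℕ) < k → w i = v i) := by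
      refine forall_congr' fun i => imp_congr_right fun hi => ?_
      rw [h i (by omega)]
    simp only [this]
  · simp [h]

lemma alt_pos (N : ℕ → ℝ) (r : ℕ) (h0 : ∀ k, 0 < N k) (h : ∀ k, k < r → N (k + 1) < N k) :
    ∀ d k, k + d + 1 = r → 0 < (-1) ^ k * ∑ j ∈ Finset.Ico k r, (-1) ^ j * N j ∧
      (-1) ^ k * ∑ j ∈ Finset.Ico k r, (-1) ^ j * N j ≤ N k := by
  have key : ∀ k, ((-1 : ℝ)) ^ k * ((-1) ^ k * N k) = N k := by
    intro k
    rw [← mul_assoc, ← mul_pow]; simp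
  intro d
  induction d with
  | zero =>
    intro k hk
    have : r = k + 1 := by omega
    subst this
    simp only [Nat.Ico_succ_singleton, Finset.sum_singleton, key]
    exact ⟨h0 k, le_rfl⟩
  | succ d ih =>
    intro k hk
    obtain ⟨h1, h2⟩ := ih (k + 1) (by omega)
    have h3 := h k (by omega)
    rw [Finset.sum_eq_sum_Ico_succ_bot (by omega : k < r), mul_add, key]
    rw [pow_succ] at h1 h2
    constructor <;> linarith

lemma adjMat_eq (r : ℕ) (hr : Even r) (a : ℕ → ℕ)
    (u v : (i : Fin r) → Fin (a ((i : ℕ) + 1))) :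
    adjMat r a u v = ∑ j ∈ Finset.range r, (-1) ^ j * eInd r a j u v := by
  classical
  by_cases huv : u = v
  · subst huv
    simp [adjMat, eInd, neg_one_geom_sum, hr]
  · have hne : ∃ m : ℕ, ∃ h : m < r, u ⟨m, h⟩ ≠ v ⟨m, h⟩ := by
      by_contra hcon
      push Not at hcon
      exact huv (funext fun i => hcon i i.2)
    obtain ⟨hm, hmne⟩ := Nat.find_spec hne
    have hmin : ∀ j : Fin r, (j : ℕ) < Nat.find hne → u j = v j := by
      intro j hj
      by_contra hc
      exact Nat.find_min hne hj ⟨j.2, hc⟩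
    generalize Nat.find hne = m at hm hmne hmin
    have he : ∀ j, eInd r a j u v = if j ≤ m then 1 else 0 := by
      intro j
      unfold eInd
      congr 1
      refine propext ⟨fun h => ?_, fun h i hi => hmin i (by omega)⟩
      by_contra hc
      exact hmne (h ⟨m, hm⟩ (by simp; omega))
    have hs : ∑ j ∈ Finset.range r, (-1 : ℝ) ^ j * eInd r a j u v =
        ∑ j ∈ Finset.range (m + 1), (-1 : ℝ) ^ j := by
      simp only [he, mul_ite, mul_one, mul_zero]
      rw [← Finset.sum_filter]
      congr 1
      ext j
      simp
      omega
    have hadj : (balG r a).Adj u v ↔ Even m := by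
      simp only [balG, SimpleGraph.fromRel_adj]
      constructor
      · have aux : ∀ i : Fin r, u i ≠ v i → (∀ j : Fin r, (j : ℕ) < i → u j = v j) →
            (i : ℕ) = m := by
          intro i hi hj
          rcases lt_trichotomy (i : ℕ) m with h | h | h
          · exact absurd (hmin i h) hi
          · exact h
          · exact absurd (hj ⟨m, hm⟩ h) hmne
        rintro ⟨-, ⟨i, hi, hE, hj⟩ | ⟨i, hi, hE, hj⟩⟩
        · rwa [← aux i hi hj]
        · rwa [← aux i hi.symm fun j h => (hj j h).symm]
      · intro hE
        exact ⟨huv, Or.inl ⟨⟨m, hm⟩, hmne, hE, hmin⟩⟩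
    rw [hs, neg_one_geom_sum]
    simp only [adjMat, Matrix.of_apply, hadj]
    by_cases hE : Even m <;> simp [hE, Nat.even_add_one]

/-- Class sums. -/
noncomputable def clsSum (r : ℕ) (a : ℕ → ℕ) (k : ℕ)
    (f : ((i : Fin r) → Fin (a ((i : ℕ) + 1))) → ℝ)
    (u : (i : Fin r) → Fin (a ((i : ℕ) + 1))) : ℝ := ∑ v, eInd r a k u v * f v

lemma adj_apply (r : ℕ) (hr : Even r) (a : ℕ → ℕ)
    (f : ((i : Fin r) → Fin (a ((i : ℕ) + 1))) → ℝ)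
    (u : (i : Fin r) → Fin (a ((i : ℕ) + 1))) :
    Matrix.toLin' (adjMat r a) f u = ∑ j ∈ Finset.range r, (-1) ^ j * clsSum r a j f u := by
  simp only [Matrix.toLin'_apply, Matrix.mulVec, dotProduct, adjMat_eq r hr, clsSum,
    Finset.sum_mul, Finset.mul_sum]
  rw [Finset.sum_comm]
  simp only [mul_assoc]

lemma clsSum_clsSum (r : ℕ) (a : ℕ → ℕ) (k j : ℕ) (hkj : k ≤ j)
    (f : ((i : Fin r) → Fin (a ((i : ℕ) + 1))) → ℝ)
    (w : (i : Fin r) → Fin (a ((i : ℕ) + 1))) :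
    ∑ u, eInd r a k w u * clsSum r a j f u = nCls r a j * clsSum r a k f w := by
  simp only [clsSum, Finset.mul_sum]
  rw [Finset.sum_comm]
  refine Finset.sum_congr rfl fun v _ => ?_
  simp only [← mul_assoc, eInd_mul r a k j hkj]
  rw [← Finset.sum_mul, ← Finset.mul_sum, sum_eInd]
  ring

lemma ker_iff (r : ℕ) (hr1 : 2 ≤ r) (hr : Even r) (a : ℕ → ℕ) (ha : ∀ k, 2 ≤ a k)
    (f : ((i : Fin r) → Fin (a ((i : ℕ) + 1))) → ℝ) :
    Matrix.toLin' (adjMat r a) f = 0 ↔ ∀ u, clsSum r a (r - 1) f u = 0 := by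
  constructor
  · intro h
    have h' : ∀ u, ∑ j ∈ Finset.range r, (-1) ^ j * clsSum r a j f u = 0 := by
      intro u
      rw [← adj_apply r hr, h]; rfl
    have main : ∀ k, k < r → ∀ u, clsSum r a k f u = 0 := by
      intro k
      induction k using Nat.strong_induction_on with
      | _ k ih =>
        intro hk w
        have h1 : ∑ u, eInd r a k w u * ∑ j ∈ Finset.Ico k r, (-1) ^ j * clsSum r a j f u = 0 := by
          refine Finset.sum_eq_zero fun u _ => ?_
          have := h' u
          rw [← Finset.sum_range_add_sum_Ico _ hk.le, Finset.sum_eq_zero, zero_add] at this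
          · rw [this, mul_zero]
          · intro j hj
            rw [Finset.mem_range] at hj
            rw [ih j hj (by omega), mul_zero]
        simp only [Finset.mul_sum] at h1
        rw [Finset.sum_comm] at h1
        have h2 : (∑ j ∈ Finset.Ico k r, (-1) ^ j * (nCls r a j : ℝ)) * clsSum r a k f w = 0 := by
          rw [← h1, Finset.sum_mul]
          refine Finset.sum_congr rfl fun j hj => ?_
          rw [mul_assoc, ← clsSum_clsSum r a k j (Finset.mem_Ico.1 hj).1, Finset.mul_sum]
          refine Finset.sum_congr rfl fun u _ => ?_
          ring
        have h3 := (alt_pos (fun k => (nCls r a k : ℝ)) r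
          (fun k => by exact_mod_cast nCls_pos r a ha k)
          (fun k hk => by exact_mod_cast nCls_lt r a ha k hk) (r - 1 - k) k (by omega)).1
        rcases mul_eq_zero.1 h2 with h4 | h4
        · rw [h4, mul_zero] at h3
          exact absurd h3 (lt_irrefl _)
        · exact h4
    exact main _ (by omega)
  · intro h
    funext u
    rw [adj_apply r hr]
    refine Finset.sum_eq_zero fun j hj => ?_
    rw [Finset.mem_range] at hj
    have := clsSum_clsSum r a j (r - 1) (by omega) f u
    simp only [h, mul_zero, Finset.sum_const_zero] at this
    have hp : (nCls r a (r - 1) : ℝ) ≠ 0 := by exact_mod_cast (nCls_pos r a ha (r - 1)).ne'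
    rcases mul_eq_zero.1 this.symm with h4 | h4
    · exact absurd h4 hp
    · rw [h4, mul_zero]

/-- Sums over the last coordinate. -/
noncomputable def lastSum (s : ℕ) (a : ℕ → ℕ) :
    (((i : Fin (s + 1)) → Fin (a ((i : ℕ) + 1))) → ℝ) →ₗ[ℝ]
      (((i : Fin s) → Fin (a ((i : ℕ) + 1))) → ℝ) where
  toFun f p := ∑ x : Fin (a (s + 1)),
    f (Fin.snoc (α := fun i : Fin (s + 1) => Fin (a ((i : ℕ) + 1))) p x)
  map_add' f g := by
    funext p
    simp [Finset.sum_add_distrib]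
  map_smul' c f := by
    funext p
    simp [Finset.mul_sum]

lemma lastSum_surj (s : ℕ) (a : ℕ → ℕ) (ha : ∀ k, 2 ≤ a k) :
    Function.Surjective (lastSum s a) := by
  classical
  intro g
  have h0 : 0 < a (s + 1) := by have := ha (s + 1); omega
  refine ⟨fun v => if v (Fin.last s) = (⟨0, h0⟩ : Fin (a (s + 1)))
    then g (Fin.init (α := fun i : Fin (s + 1) => Fin (a ((i : ℕ) + 1))) v) else 0, ?_⟩
  funext p
  change ∑ x : Fin (a (s + 1)), _ = _
  simp only [Fin.snoc_last, Fin.init_snoc]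
  rw [Finset.sum_ite_eq' Finset.univ (⟨0, h0⟩ : Fin (a (s + 1)))]
  simp

lemma clsSum_last (s : ℕ) (a : ℕ → ℕ)
    (f : ((i : Fin (s + 1)) → Fin (a ((i : ℕ) + 1))) → ℝ)
    (p : (i : Fin s) → Fin (a ((i : ℕ) + 1))) (x : Fin (a (s + 1))) :
    clsSum (s + 1) a s f
      (Fin.snoc (α := fun i : Fin (s + 1) => Fin (a ((i : ℕ) + 1))) p x) = lastSum s a f p := by
  classical
  unfold clsSum
  rw [← (Fin.snocEquiv (fun i : Fin (s + 1) => Fin (a ((i : ℕ) + 1)))).sum_comp,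
    Fintype.sum_prod_type]
  change _ = ∑ x : Fin (a (s + 1)), _
  refine Finset.sum_congr rfl fun y _ => ?_
  refine (Finset.sum_eq_single p ?_ ?_).trans ?_
  rotate_left 2
  · have : eInd (s + 1) a s
        (Fin.snoc (α := fun i : Fin (s + 1) => Fin (a ((i : ℕ) + 1))) p x)
        (Fin.snoc (α := fun i : Fin (s + 1) => Fin (a ((i : ℕ) + 1))) p y) = 1 := by
      unfold eInd
      rw [if_pos]
      intro j hj
      obtain ⟨j, rfl⟩ : ∃ i : Fin s, j = i.castSucc := ⟨⟨j, hj⟩, rfl⟩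
      rw [Fin.snoc_castSucc, Fin.snoc_castSucc]
    simp only [Fin.snocEquiv, Equiv.coe_fn_mk]
    rw [this, one_mul]
  · intro q _ hq
    have : eInd (s + 1) a s
        (Fin.snoc (α := fun i : Fin (s + 1) => Fin (a ((i : ℕ) + 1))) p x)
        (Fin.snoc (α := fun i : Fin (s + 1) => Fin (a ((i : ℕ) + 1))) q y) = 0 := by
      unfold eInd
      rw [if_neg]
      intro hc
      apply hq
      funext j
      have := hc j.castSucc j.2
      rw [Fin.snoc_castSucc, Fin.snoc_castSucc] at this
      exact this.symm
    simp only [Fin.snocEquiv, Equiv.coe_fn_mk]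
    rw [this, zero_mul]
  · intro h
    exact absurd (Finset.mem_univ _) h

/-- For `r ≥ 2` even and `a_i ≥ 2`, the multiplicity of the eigenvalue `0` of the
cograph with balanced cotree `T_G(a_1,…,a_{r-1},0|0,…,0,a_r)` is
`a_1 ⋯ a_{r-1} (a_r - 1)`. -/
theorem multiplicity_zero_r_even (r : ℕ) (hr1 : 2 ≤ r) (hr : Even r)
    (a : ℕ → ℕ) (ha : ∀ k, 2 ≤ a k) :
    Module.finrank ℝ (LinearMap.ker (Matrix.toLin' (adjMat r a))) =
      (∏ k ∈ Finset.Icc 1 (r - 1), a k) * (a r - 1) := by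
  obtain ⟨s, rfl⟩ : ∃ s, r = s + 1 := ⟨r - 1, by omega⟩
  have hk : LinearMap.ker (Matrix.toLin' (adjMat (s + 1) a)) = LinearMap.ker (lastSum s a) := by
    ext f
    rw [LinearMap.mem_ker, LinearMap.mem_ker, ker_iff (s + 1) hr1 hr a ha]
    constructor
    · intro h
      funext p
      rw [← clsSum_last s a f p ⟨0, by have := ha (s + 1); omega⟩]
      exact h _
    · intro h u
      have := clsSum_last s a f
        (Fin.init (α := fun i : Fin (s + 1) => Fin (a ((i : ℕ) + 1))) u) (u (Fin.last s))
      rw [Fin.snoc_init_self, h] at this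
      exact this
  rw [hk]
  have hrn := LinearMap.finrank_range_add_finrank_ker (lastSum s a)
  rw [LinearMap.range_eq_top.2 (lastSum_surj s a ha), finrank_top,
    Module.finrank_fintype_fun_eq_card, Module.finrank_fintype_fun_eq_card,
    Fintype.card_pi, Fintype.card_pi, Fin.prod_univ_castSucc] at hrn
  simp only [Fintype.card_fin, Fin.val_castSucc, Fin.val_last] at hrn
  rw [Fin.prod_univ_eq_prod_range (fun i => a (i + 1)) s] at hrn
  have hp : ∏ k ∈ Finset.Icc 1 (s + 1 - 1), a k = ∏ i ∈ Finset.range s, a (i + 1) := by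
    rw [Finset.range_eq_Ico, Finset.prod_Ico_add' a 0 s 1]
    rfl
  rw [hp, Nat.mul_sub, mul_one]
  omega
end
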